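/- arXiv:1009.3637 — 2 statements merged into one kernel-verified Lean document; each statement's English description precedes it below -/
import Mathlib

section
/- Let k be an infinite field, let f_1,…,f_m ∈ k[y_1,…,y_M] have total degrees d_1,…,d_m, let x ∈ k^M be a common zero of the f_i, let g_i be the translate of f_i to x, and let ℓ_i be the degree-1 homogeneous component of g_i. Then for every v ∈ k^M with ℓ_i(v) = 0 for all i (a tangent direction at x), the affine line through x with direction v is contained in V(f_1,…,f_m) if and only if for every i and every j with 2 ≤ j ≤ d_i the degree-j homogeneous component of g_i vanishes at v; moreover, for every j > d_i the degree-j homogeneous component of g_i is identically zero. Hence inside the tangent space at x the directions of lines through x contained in V(f_1,…,f_m) are cut out by at most (d_1 − 1) + ⋯ + (d_m − 1) equations. -/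
open MvPolynomial

/-!
Restricting `f` to the line `t ↦ x + t • v` gives a univariate polynomial in `t`. Expanding the
translate of `f` to `x` into homogeneous components, its coefficient of `t ^ j` is the value at `v`
of the degree-`j` component, so it has degree at most the total degree `d` of `f`. Over a domain
with more than `d` elements it vanishes at every `t` exactly when all its coefficients are zero;
those of degree `0` and `1` vanish because `x` is a zero of `f` and `v` is a tangent direction.
-/

open scoped Cardinal Polynomial

section Translate

variable {σ τ R : Type*} [CommSemiring R]

theorem totalDegree_bind₁_le {g : σ → MvPolynomial τ R} {n : ℕ}
    (hg : ∀ i, (g i).totalDegree ≤ n) (f : MvPolynomial σ R) :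
    (bind₁ g f).totalDegree ≤ f.totalDegree * n := by
  conv_lhs => rw [f.as_sum, map_sum]
  refine totalDegree_finsetSum_le fun s hs => ?_
  rw [bind₁_monomial]
  calc (C (coeff s f) * ∏ i ∈ s.support, g i ^ s i).totalDegree
      ≤ (∏ i ∈ s.support, g i ^ s i).totalDegree := by
        simpa only [totalDegree_C, zero_add] using
          totalDegree_mul (C (coeff s f)) (∏ i ∈ s.support, g i ^ s i)
    _ ≤ ∑ i ∈ s.support, (g i ^ s i).totalDegree := totalDegree_finsetProd _ _
    _ ≤ ∑ i ∈ s.support, s i * n := Finset.sum_le_sum fun i _ =>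
        (totalDegree_pow _ _).trans (Nat.mul_le_mul_left _ (hg i))
    _ = (s.sum fun _ e => e) * n := (Finset.sum_mul _ _ _).symm
    _ ≤ f.totalDegree * n := Nat.mul_le_mul_right _ (le_totalDegree hs)

/-- The translation `f(Y) ↦ f(x + Y)`, which moves the point `x` to the origin. -/
noncomputable def translateTo (x : σ → R) : MvPolynomial σ R →ₐ[R] MvPolynomial σ R :=
  bind₁ fun j => C (x j) + X j

theorem totalDegree_translateTo_le (x : σ → R) (f : MvPolynomial σ R) :
    (translateTo x f).totalDegree ≤ f.totalDegree := by
  have linear (i : σ) : (C (x i) + X i : MvPolynomial σ R).totalDegree ≤ 1 :=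
    (totalDegree_add _ _).trans <| max_le (by simp) <|
      (totalDegree_monomial_le _ _).trans (by simp)
  simpa only [translateTo, mul_one] using totalDegree_bind₁_le linear f

theorem homogeneousComponent_translateTo_eq_zero (x : σ → R) {f : MvPolynomial σ R} {j : ℕ}
    (hj : f.totalDegree < j) : homogeneousComponent j (translateTo x f) = 0 :=
  homogeneousComponent_eq_zero _ _ ((totalDegree_translateTo_le x f).trans_lt hj)

end Translate

section RestrictToLine

variable {σ R : Type*} [CommSemiring R]

/-- The restriction of a polynomial to the line through `x` with direction `v`, as a univariate
polynomial in the parameter `t` of the point `x + t • v`. -/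
noncomputable def restrictToLine (x v : σ → R) : MvPolynomial σ R →ₐ[R] R[X] :=
  aeval fun i => Polynomial.C (x i) + Polynomial.C (v i) * Polynomial.X

theorem eval_restrictToLine (x v : σ → R) (t : R) (f : MvPolynomial σ R) :
    (restrictToLine x v f).eval t = eval (x + t • v) f := by
  induction f using MvPolynomial.induction_on with
  | C a => simp [restrictToLine]
  | add p q hp hq => simp only [map_add, Polynomial.eval_add, hp, hq]
  | mul_X p i hp =>
    rw [map_mul, Polynomial.eval_mul, hp]
    simp [restrictToLine, mul_comm t]

theorem restrictToLine_zero_translateTo (x v : σ → R) (f : MvPolynomial σ R) :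
    restrictToLine 0 v (translateTo x f) = restrictToLine x v f := by
  rw [restrictToLine, restrictToLine, translateTo, aeval_bind₁]
  simp

theorem restrictToLine_zero_monomial (v : σ → R) (s : σ →₀ ℕ) (a : R) :
    restrictToLine 0 v (monomial s a) =
      Polynomial.monomial s.degree (eval v (monomial s a)) := by
  rw [← Polynomial.C_mul_X_pow_eq_monomial, eval_monomial]
  simp [restrictToLine, aeval_monomial, Finsupp.prod, mul_pow, Finset.prod_mul_distrib,
    Finset.prod_pow_eq_pow_sum, Finsupp.degree_apply, mul_assoc]

theorem coeff_restrictToLine_zero (v : σ → R) (f : MvPolynomial σ R) (j : ℕ) :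
    (restrictToLine 0 v f).coeff j = eval v (homogeneousComponent j f) := by
  conv_lhs => rw [f.as_sum]
  simp only [map_sum, Polynomial.finsetSum_coeff, restrictToLine_zero_monomial,
    Polynomial.coeff_monomial, homogeneousComponent_apply, Finset.sum_filter,
    apply_ite (eval v), map_zero]

theorem coeff_restrictToLine (x v : σ → R) (f : MvPolynomial σ R) (j : ℕ) :
    (restrictToLine x v f).coeff j = eval v (homogeneousComponent j (translateTo x f)) := by
  rw [← restrictToLine_zero_translateTo, coeff_restrictToLine_zero]

theorem natDegree_restrictToLine_le (x v : σ → R) (f : MvPolynomial σ R) :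
    (restrictToLine x v f).natDegree ≤ f.totalDegree :=
  Polynomial.natDegree_le_iff_coeff_eq_zero.mpr fun j hj => by
    rw [coeff_restrictToLine, homogeneousComponent_translateTo_eq_zero x hj, map_zero]

theorem eval_homogeneousComponent_zero_translateTo (x v : σ → R) (f : MvPolynomial σ R) :
    eval v (homogeneousComponent 0 (translateTo x f)) = eval x f := by
  rw [← coeff_restrictToLine, Polynomial.coeff_zero_eq_eval_zero, eval_restrictToLine,
    zero_smul, add_zero]

end RestrictToLine

section LinesInZeroLocus

variable {σ R : Type*} [CommRing R] [IsDomain R] {f : MvPolynomial σ R}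

theorem forall_eval_line_eq_zero_iff (hf : f.totalDegree < #R) (x v : σ → R) :
    (∀ t : R, eval (x + t • v) f = 0) ↔
      ∀ j ≤ f.totalDegree, eval v (homogeneousComponent j (translateTo x f)) = 0 := by
  have hdeg := natDegree_restrictToLine_le x v f
  calc (∀ t : R, eval (x + t • v) f = 0)
      ↔ ∀ t, (restrictToLine x v f).eval t = 0 := by simp only [eval_restrictToLine]
    _ ↔ restrictToLine x v f = 0 :=
        ⟨fun h => Polynomial.eq_zero_of_forall_eval_zero_of_natDegree_lt_card _ h
          ((Nat.cast_le.mpr hdeg).trans_lt hf), fun h t => by rw [h, Polynomial.eval_zero]⟩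
    _ ↔ ∀ j ≤ f.totalDegree, (restrictToLine x v f).coeff j = 0 := by
        rw [Polynomial.ext_iff_natDegree_le hdeg (by simp)]
        simp only [Polynomial.coeff_zero]
    _ ↔ ∀ j ≤ f.totalDegree, eval v (homogeneousComponent j (translateTo x f)) = 0 := by
        simp only [coeff_restrictToLine]

theorem forall_eval_line_eq_zero_iff_of_tangent (hf : f.totalDegree < #R) {x v : σ → R}
    (hx : eval x f = 0) (hv : eval v (homogeneousComponent 1 (translateTo x f)) = 0) :
    (∀ t : R, eval (x + t • v) f = 0) ↔
      ∀ j, 2 ≤ j → j ≤ f.totalDegree →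
        eval v (homogeneousComponent j (translateTo x f)) = 0 := by
  rw [forall_eval_line_eq_zero_iff hf]
  refine ⟨fun h j _ hj => h j hj, fun h j hj => ?_⟩
  match j with
  | 0 => rw [eval_homogeneousComponent_zero_translateTo, hx]
  | 1 => exact hv
  | j + 2 => exact h (j + 2) (Nat.le_add_left 2 j) hj

end LinesInZeroLocus

theorem lines_through_point_cut_out_by_higher_components_general
    {σ ι R : Type*} [CommRing R] [IsDomain R]
    (F : ι → MvPolynomial σ R) (d : ι → ℕ)
    (hd : ∀ i, (F i).totalDegree = d i) (hcard : ∀ i, d i < #R)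
    (x : σ → R) (hx : ∀ i, eval x (F i) = 0)
    (G : ι → MvPolynomial σ R) (hG : ∀ i, G i = translateTo x (F i))
    (L : ι → MvPolynomial σ R) (hL : ∀ i, L i = homogeneousComponent 1 (G i)) :
    (∀ v : σ → R, (∀ i, eval v (L i) = 0) →
      ((∀ t : R, ∀ i, eval (x + t • v) (F i) = 0) ↔
        ∀ i, ∀ j : ℕ, 2 ≤ j → j ≤ d i →
          eval v (homogeneousComponent j (G i)) = 0)) ∧
    (∀ i, ∀ j : ℕ, d i < j → homogeneousComponent j (G i) = 0) := by
  obtain rfl : (fun i => (F i).totalDegree) = d := funext hd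
  obtain rfl : G = fun i => translateTo x (F i) := funext hG
  obtain rfl : L = fun i => homogeneousComponent 1 (translateTo x (F i)) := funext hL
  refine ⟨fun v hv => ?_, fun i j hj => homogeneousComponent_translateTo_eq_zero x hj⟩
  rw [forall_comm]
  exact forall_congr' fun i =>
    forall_eval_line_eq_zero_iff_of_tangent (hcard i) (hx i) (hv i)

/-- Let `f_1,…,f_m` have total degrees `d_1,…,d_m`, let `x` be a common zero,
`g_i` the translate of `f_i` to `x` and `ℓ_i` the degree-1 component of `g_i`. For every
tangent direction `v` (i.e. `ℓ_i(v) = 0` for all `i`), the affine line through `x` with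
direction `v` lies in `V(f_1,…,f_m)` iff for all `i` and all `2 ≤ j ≤ d_i` the degree-`j`
homogeneous component of `g_i` vanishes at `v`; moreover for `j > d_i` the degree-`j`
homogeneous component of `g_i` is identically zero. -/
theorem lines_through_point_cut_out_by_higher_components
    {k : Type*} [Field k] [Infinite k] {M m : ℕ}
    (F : Fin m → MvPolynomial (Fin M) k) (d : Fin m → ℕ)
    (hd : ∀ i, (F i).totalDegree = d i)
    (x : Fin M → k) (hx : ∀ i, eval x (F i) = 0)
    (G : Fin m → MvPolynomial (Fin M) k)
    (hG : ∀ i, G i = bind₁ (fun j => C (x j) + X j) (F i))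
    (L : Fin m → MvPolynomial (Fin M) k)
    (hL : ∀ i, L i = homogeneousComponent 1 (G i)) :
    (∀ v : Fin M → k, (∀ i, eval v (L i) = 0) →
      ((∀ t : k, ∀ i, eval (x + t • v) (F i) = 0) ↔
        ∀ i, ∀ j : ℕ, 2 ≤ j → j ≤ d i →
          eval v (homogeneousComponent j (G i)) = 0)) ∧
    (∀ i, ∀ j : ℕ, d i < j → homogeneousComponent j (G i) = 0) :=
  lines_through_point_cut_out_by_higher_components_general F d hd
    (fun _ => Cardinal.natCast_lt_aleph0.trans_le (Cardinal.aleph0_le_mk k)) x hx G hG L hL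
end

section
/- Let k be an infinite field, let f_1,…,f_m ∈ k[y_1,…,y_M] each have total degree at most 2, let X = V(f_1,…,f_m) and let x ∈ X. Then the set { y ∈ k^M : x + t·(y − x) ∈ X for all t ∈ k } equals the set { y ∈ X : Σ_{j=1}^{M} (y_j − x_j) · (∂f_i/∂y_j)(x) = 0 for all i }. In other words, for a quadratic variety X the intersection of X with its embedded affine tangent space at x is exactly the union of the affine lines through x contained in X (it is a cone with vertex x). -/
open MvPolynomial

/-!
On a line `t ↦ x + t • v` a polynomial of degree at most 2 becomes a univariate quadratic `q`, and
a quadratic is determined by `q(0)`, `q(1)` and `q'(0)`: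
`q(t) = (1 - t²) q(0) + t² q(1) + t (1 - t) q'(0)`.
Here `q(0)` and `q(1)` are the values at `x` and `x + v`, while by the chain rule `q'(0)` is the
linear form in `v` cutting out the tangent space at `x`. When `x` and `x + v` lie on the variety,
only `t (1 - t) q'(0)` remains, so the line lies on the variety exactly when `q'(0) = 0`, as soon as
some scalar `t` makes `t (1 - t)` cancellable.
-/

theorem eval_eq_of_natDegree_le_two {R : Type*} [CommRing R] {q : Polynomial R}
    (hq : q.natDegree ≤ 2) (t : R) :
    q.eval t = (1 - t ^ 2) * q.eval 0 + t ^ 2 * q.eval 1 +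
      t * (1 - t) * q.derivative.eval 0 := by
  have eval_eq (s : R) : q.eval s = q.coeff 0 + q.coeff 1 * s + q.coeff 2 * s ^ 2 := by
    simp [Polynomial.eval_eq_sum_range' (Nat.lt_succ_of_le hq), Finset.sum_range_succ]
  have derivative_eq : q.derivative.eval 0 = q.coeff 1 := by
    simp [← Polynomial.coeff_zero_eq_eval_zero, Polynomial.coeff_derivative]
  rw [derivative_eq, eval_eq t, eval_eq 0, eval_eq 1]
  ring

theorem derivation_aeval {R A N σ : Type*} [CommSemiring R] [CommSemiring A] [Algebra R A]
    [AddCommMonoid N] [Module A N] [Module R N] [Fintype σ]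
    (D : Derivation R A N) (g : σ → A) (p : MvPolynomial σ R) :
    D (aeval g p) = ∑ j, aeval g (pderiv j p) • D (g j) := by
  classical
  induction p using MvPolynomial.induction_on with
  | C r => simp
  | add p q hp hq => simp [hp, hq, add_smul, Finset.sum_add_distrib]
  | mul_X p i hp =>
    simp [hp, pderiv_X, Pi.single_apply, apply_ite, add_smul, ite_smul, Finset.sum_add_distrib,
      Finset.smul_sum, mul_smul]

section LineRestriction

variable {R σ : Type*} [CommSemiring R]

/-- Restriction of polynomial functions to the parametrized line `t ↦ x + t • v`, as a homomorphism
to univariate polynomials in the parameter `t`. -/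
noncomputable def lineRestriction (x v : σ → R) : MvPolynomial σ R →ₐ[R] Polynomial R :=
  aeval fun j => Polynomial.C (v j) * Polynomial.X + Polynomial.C (x j)

theorem eval_lineRestriction (x v : σ → R) (p : MvPolynomial σ R) (t : R) :
    (lineRestriction x v p).eval t = eval (x + t • v) p := by
  have algHom_eq : (Polynomial.aeval t).comp (lineRestriction x v) = aeval (x + t • v) := by
    ext j
    simp [lineRestriction, add_comm (x j), mul_comm t]
  simpa [Polynomial.coe_aeval_eq_eval, aeval_eq_eval] using DFunLike.congr_fun algHom_eq p

theorem natDegree_lineRestriction_le (x v : σ → R) (p : MvPolynomial σ R) :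
    (lineRestriction x v p).natDegree ≤ p.totalDegree := by
  simpa only [lineRestriction, mul_one] using
    aeval_natDegree_le p le_rfl _ fun _ => Polynomial.natDegree_linear_le

theorem derivative_lineRestriction [Fintype σ] (x v : σ → R) (p : MvPolynomial σ R) :
    (lineRestriction x v p).derivative =
      ∑ j, lineRestriction x v (pderiv j p) * Polynomial.C (v j) := by
  calc
    (lineRestriction x v p).derivative =
        ∑ j, lineRestriction x v (pderiv j p) •
          Polynomial.derivative (Polynomial.C (v j) * Polynomial.X + Polynomial.C (x j)) :=
      derivation_aeval Polynomial.derivative' _ p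
    _ = ∑ j, lineRestriction x v (pderiv j p) * Polynomial.C (v j) := by simp

end LineRestriction

theorem eval_add_smul_of_totalDegree_le_two {R σ : Type*} [CommRing R] [Fintype σ]
    {p : MvPolynomial σ R} (hp : p.totalDegree ≤ 2) (x v : σ → R) (t : R) :
    eval (x + t • v) p = (1 - t ^ 2) * eval x p + t ^ 2 * eval (x + v) p +
      t * (1 - t) * ∑ j, v j * eval x (pderiv j p) := by
  have degree_le := (natDegree_lineRestriction_le x v p).trans hp
  simpa [derivative_lineRestriction, Polynomial.eval_finsetSum, eval_lineRestriction, mul_comm]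
    using eval_eq_of_natDegree_le_two degree_le t

theorem forall_eval_add_smul_eq_zero_iff {R σ : Type*} [CommRing R] [Fintype σ]
    {a : R} (ha : a * (1 - a) ∈ nonZeroDivisors R) {p : MvPolynomial σ R}
    (hp : p.totalDegree ≤ 2) {x : σ → R} (hx : eval x p = 0) (v : σ → R) :
    (∀ t : R, eval (x + t • v) p = 0) ↔
      eval (x + v) p = 0 ∧ ∑ j, v j * eval x (pderiv j p) = 0 := by
  constructor
  · intro line_subset
    have endpoint : eval (x + v) p = 0 := by simpa only [one_smul] using line_subset 1
    have product_eq_zero : a * (1 - a) * ∑ j, v j * eval x (pderiv j p) = 0 := by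
      simpa only [eval_add_smul_of_totalDegree_le_two hp, hx, endpoint, mul_zero, zero_add]
        using line_subset a
    exact ⟨endpoint, (mul_left_mem_nonZeroDivisors_eq_zero_iff ha).mp product_eq_zero⟩
  · rintro ⟨endpoint, tangent⟩ t
    simp only [eval_add_smul_of_totalDegree_le_two hp, hx, endpoint, tangent, mul_zero, add_zero]

theorem tangent_intersection_of_quadratic_is_cone_of_lines_general
    {R σ ι : Type*} [CommRing R] [Fintype σ] {a : R} (ha : a * (1 - a) ∈ nonZeroDivisors R)
    (F : ι → MvPolynomial σ R) (hdeg : ∀ i, (F i).totalDegree ≤ 2)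
    (x : σ → R) (hx : ∀ i, eval x (F i) = 0) :
    {y : σ → R | ∀ t : R, ∀ i, eval (x + t • (y - x)) (F i) = 0} =
      {y : σ → R | (∀ i, eval y (F i) = 0) ∧
        ∀ i, ∑ j, (y j - x j) * eval x (pderiv j (F i)) = 0} := by
  ext y
  have line_iff (i : ι) := forall_eval_add_smul_eq_zero_iff ha (hdeg i) (hx i) (y - x)
  simp only [add_sub_cancel, Pi.sub_apply] at line_iff
  simp only [Set.mem_ofPred_eq]
  rw [forall_comm, ← forall_and]
  exact forall_congr' line_iff

theorem exists_mul_one_sub_mem_nonZeroDivisors (R : Type*) [CommRing R] [IsDomain R]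
    [Infinite R] : ∃ a : R, a * (1 - a) ∈ nonZeroDivisors R := by
  obtain ⟨a, a_ne_zero, a_ne_one⟩ : ∃ a : R, a ≠ 0 ∧ a ≠ 1 := by
    classical
    simpa using Infinite.exists_notMem_finset ({0, 1} : Finset R)
  exact ⟨a, mem_nonZeroDivisors_of_ne_zero (mul_ne_zero a_ne_zero (sub_ne_zero.mpr a_ne_one.symm))⟩

/-- For a quadratic variety `X = V(f_1,…,f_m)` (each `f_i` of total degree at
most 2) and `x ∈ X`, the set of points `y` such that the whole affine line through `x` and
`y` lies in `X` equals the intersection of `X` with its embedded affine tangent space at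
`x`. -/
theorem tangent_intersection_of_quadratic_is_cone_of_lines
    {k : Type*} [Field k] [Infinite k] {M m : ℕ}
    (F : Fin m → MvPolynomial (Fin M) k)
    (hdeg : ∀ i, (F i).totalDegree ≤ 2)
    (x : Fin M → k) (hx : ∀ i, eval x (F i) = 0) :
    {y : Fin M → k | ∀ t : k, ∀ i, eval (x + t • (y - x)) (F i) = 0} =
      {y : Fin M → k | (∀ i, eval y (F i) = 0) ∧
        ∀ i, ∑ j : Fin M, (y j - x j) * eval x (pderiv j (F i)) = 0} := by
  obtain ⟨a, ha⟩ := exists_mul_one_sub_mem_nonZeroDivisors k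
  exact tangent_intersection_of_quadratic_is_cone_of_lines_general ha F hdeg x hx
end
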